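/- Let p be a positive integer. If a multigraph G contains 2^p pairwise edge-disjoint spanning trees, then G has a spanning tree T such that deg_T(v) ≤ deg_G(v)/2^p + 3p/2 for every vertex v of G. -/

import Mathlib

/-!
The union of two edge-disjoint spanning trees has at least two edges across every cut. Such a
graph `H` has an ear decomposition starting from any vertex `r`: as long as some vertex is not
covered, an edge leaving the covered part `R` extends to a path that returns to `R` through a
different edge (`exists_earPath`, `EarSystem.step`). Deleting either end edge of each ear leaves a
connected spanning subgraph, so for each ear there is a free choice of the end edge that is kept.
Regard each ear as an edge joining its two attachment vertices and orient the resulting auxiliary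
multigraph so that every out-degree is at most half the degree, rounded up (`exists_balanced`).
Keep, for each ear, the end edge at its tail. A vertex other than `r` is an inner vertex of exactly
one ear, which contributes at most `2` to its degree, and its auxiliary degree is at most
`deg_H v - 2`; hence it has degree at most `2 + (deg_H v - 2 + 1) / 2 = deg_H v / 2 + 3 / 2`
in the connected subgraph obtained, and in any spanning tree of it (`exists_sparse_of_two`).

For `2 ^ p` trees, split them into two halves, find a sparse tree in each half by induction and
combine the two trees by the case of two trees. The degree in
the new tree is at most the average of the two degrees plus `3 / 2`, so `p` rounds cost `3 p / 2`.
-/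

open SimpleGraph

/-- A multigraph on vertex type `V` with edge-index type `E`: every edge (possibly a loop)
is given by its pair of endpoints. -/
structure Multigraph (V : Type*) (E : Type*) where
  ends : E → Sym2 V

namespace Multigraph

variable {V E : Type*}

/-- The simple graph on the vertex subset `A` whose adjacencies are realized by the
edges in the set `F`. -/
def simpleOn (G : Multigraph V E) (A : Set V) (F : Set E) : SimpleGraph A :=
  SimpleGraph.fromRel (fun a b => ∃ e ∈ F, G.ends e = s(a.1, b.1))

/-- The spanning submultigraph of `G` with edge set `F` is `k`-edge-connected: there are
at least two vertices and after deleting any set of fewer than `k` edges it stays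
connected. -/
def EdgeConnectedSub [Fintype V] (G : Multigraph V E) (F : Set E) (k : ℕ) : Prop :=
  1 < Fintype.card V ∧
    ∀ S : Set E, S.Finite → S.ncard < k → (G.simpleOn Set.univ (F \ S)).Connected

/-- The multigraph `G` is `k`-edge-connected. -/
def EdgeConnected [Fintype V] (G : Multigraph V E) (k : ℕ) : Prop :=
  G.EdgeConnectedSub Set.univ k

/-- The induced submultigraph `G[A]` is `k`-edge-connected. -/
def EdgeConnectedOn (G : Multigraph V E) (A : Set V) (k : ℕ) : Prop :=
  1 < A.ncard ∧
    ∀ S : Set E, S.Finite → S.ncard < k → (G.simpleOn A Sᶜ).Connected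

/-- The degree of `v` in the spanning submultigraph of `G` with edge set `F`
(a loop at `v` contributes `2`). -/
noncomputable def degOn (G : Multigraph V E) (F : Set E) (v : V) : ℕ :=
  {e ∈ F | v ∈ G.ends e}.ncard + {e ∈ F | G.ends e = s(v, v)}.ncard

/-- The degree of `v` in `G` (a loop at `v` contributes `2`). -/
noncomputable def deg (G : Multigraph V E) (v : V) : ℕ :=
  G.degOn Set.univ v

/-- `T` (a set of edges of `G`) is a spanning tree of `G`: it has no loops, no two of its
edges are parallel, and the corresponding simple graph on all of `V` is connected and
acyclic. -/
def IsSpanningTree (G : Multigraph V E) (T : Set E) : Prop :=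
  (∀ e ∈ T, ¬ (G.ends e).IsDiag) ∧ Set.InjOn G.ends T ∧
    (G.simpleOn Set.univ T).Connected ∧ (G.simpleOn Set.univ T).IsAcyclic

end Multigraph

namespace Multigraph

open Finset
open scoped Classical

variable {V E : Type*}

/-! ### Cuts -/

/-- The edge `e` joins the vertex set `X` to its complement. -/
def Crosses (G : Multigraph V E) (e : E) (X : Set V) : Prop :=
  ∃ x y, G.ends e = s(x, y) ∧ x ∈ X ∧ y ∉ X

/-- The edges in `D` connect the vertices of `R` to each other, expressed through cuts: each
vertex set that separates two vertices of `R` is crossed by an edge of `D`. -/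
def Links (G : Multigraph V E) (D : Finset E) (R : Set V) : Prop :=
  ∀ X : Set V, (∃ x ∈ R, x ∈ X) → (∃ y ∈ R, y ∉ X) → ∃ e ∈ D, G.Crosses e X

/-- The number of edges in `D` incident with `w`; a loop counts once. -/
noncomputable def inc (G : Multigraph V E) (D : Finset E) (w : V) : ℕ :=
  #{e ∈ D | w ∈ G.ends e}

lemma Links.glue {G : Multigraph V E} {D D' K : Finset E} {P R : Set V} {c : E} {p q : V}
    (hP : G.Links D P) (hR : G.Links D' R) (hc : G.ends c = s(p, q)) (hp : p ∈ P) (hq : q ∈ R)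
    (hDK : D ⊆ K) (hDK' : D' ⊆ K) (hcK : c ∈ K) : G.Links K (P ∪ R) := by
  rintro X ⟨x, hx, hxX⟩ ⟨y, hy, hyX⟩
  by_cases h1 : (∃ x ∈ P, x ∈ X) ∧ (∃ y ∈ P, y ∉ X)
  · obtain ⟨e, he, h⟩ := hP X h1.1 h1.2
    exact ⟨e, hDK he, h⟩
  by_cases h2 : (∃ x ∈ R, x ∈ X) ∧ (∃ y ∈ R, y ∉ X)
  · obtain ⟨e, he, h⟩ := hR X h2.1 h2.2
    exact ⟨e, hDK' he, h⟩
  refine ⟨c, hcK, ?_⟩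
  by_cases hpX : p ∈ X
  · refine ⟨p, q, hc, hpX, fun hqX => ?_⟩
    rcases hy with hy | hy
    · exact h1 ⟨⟨p, hp, hpX⟩, ⟨y, hy, hyX⟩⟩
    · exact h2 ⟨⟨q, hq, hqX⟩, ⟨y, hy, hyX⟩⟩
  · refine ⟨q, p, by rw [hc, Sym2.eq_swap], ?_, hpX⟩
    by_contra hqX
    rcases hx with hx | hx
    · exact h1 ⟨⟨x, hx, hxX⟩, ⟨p, hp, hpX⟩⟩
    · exact h2 ⟨⟨x, hx, hxX⟩, ⟨q, hq, hqX⟩⟩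

lemma links_singleton (G : Multigraph V E) (D : Finset E) (z : V) : G.Links D {z} := by
  rintro X ⟨x, rfl, hx⟩ ⟨y, rfl, hy⟩
  exact absurd hx hy

lemma inc_insert (G : Multigraph V E) {D : Finset E} {c : E} (hc : c ∉ D) (w : V) :
    G.inc (insert c D) w = G.inc D w + if w ∈ G.ends c then 1 else 0 := by
  unfold inc
  rw [filter_insert]
  split_ifs with h
  · rw [card_insert_of_notMem (by simp [hc])]
  · rfl

lemma inc_mono (G : Multigraph V E) {D K : Finset E} (h : D ⊆ K) (w : V) :
    G.inc D w ≤ G.inc K w :=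
  card_le_card (filter_subset_filter _ h)

lemma inc_union_le (G : Multigraph V E) (D K : Finset E) (w : V) :
    G.inc (D ∪ K) w ≤ G.inc D w + G.inc K w := by
  unfold inc
  rw [filter_union]
  exact card_union_le _ _

lemma inc_union (G : Multigraph V E) {D K : Finset E} (h : Disjoint D K) (w : V) :
    G.inc (D ∪ K) w = G.inc D w + G.inc K w := by
  unfold inc
  rw [filter_union, card_union_of_disjoint (disjoint_filter_filter h)]

lemma inc_eq_zero (G : Multigraph V E) {D : Finset E} {R : Set V}
    (h : ∀ e ∈ D, ∀ w ∈ G.ends e, w ∈ R) {w : V} (hw : w ∉ R) : G.inc D w = 0 := by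
  unfold inc
  rw [card_eq_zero, filter_eq_empty_iff]
  exact fun e he hwe => hw (h e he w hwe)

/-- A family of vertex sets in which every member either satisfies `goal` or is properly
contained in another member has a member satisfying `goal`. -/
lemma exists_of_grow [Finite V] (Q goal : Set V → Prop)
    (h : ∀ S, Q S → goal S ∨ ∃ S', S ⊂ S' ∧ Q S') (S : Set V) (hS : Q S) :
    ∃ S, Q S ∧ goal S := by
  induction S using (wellFounded_gt (α := Set V)).induction with
  | _ S ih =>
    rcases h S hS with hg | ⟨S', hlt, hQ⟩
    · exact ⟨S, hS, hg⟩
    · exact ih S' hlt hQ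

/-! ### Balanced orientations -/

/-- A finite multigraph, given by `t i true` and `t i false` as the ends of the edge `i`, has an
orientation (`σ` selects the tail of each edge) in which each out-degree is at most half of the
degree, rounded up. Two edges with a common end are merged into one edge that passes through that
end, which reduces the number of edges. -/
lemma exists_balanced {ι : Type*} (n : ℕ) : ∀ (s : Finset ι), #s = n → ∀ t : ι → Bool → V,
    ∃ σ : ι → Bool, ∀ w, 2 * ∑ i ∈ s, (if t i (σ i) = w then 1 else 0) ≤
      ∑ i ∈ s, ((if t i true = w then 1 else 0) + (if t i false = w then 1 else 0)) + 1 := by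
  induction n with
  | zero =>
    intro s hs t
    rw [card_eq_zero] at hs
    subst hs
    exact ⟨fun _ => true, by simp⟩
  | succ n ih =>
    intro s hs t
    by_cases h : ∃ i ∈ s, ∃ j ∈ s, i ≠ j ∧ ∃ x y, t i x = t j y
    · obtain ⟨i, hi, j, hj, hij, x, y, hxy⟩ := h
      obtain ⟨σ', hσ'⟩ := ih (s.erase j) (by rw [card_erase_of_mem hj, hs]; rfl)
        (Function.update t i (Function.update (t i) x (t j (!y))))
      refine ⟨fun k => if k = j then (if σ' i = x then !y else y) else σ' k, fun w => ?_⟩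
      have hi' : i ∈ s.erase j := mem_erase.2 ⟨hij, hi⟩
      have hw := hσ' w
      rw [← add_sum_erase _ _ hi', ← add_sum_erase _ _ hi'] at hw
      rw [← add_sum_erase _ _ hj, ← add_sum_erase _ _ hi', ← add_sum_erase _ _ hj,
        ← add_sum_erase _ _ hi']
      have e1 : ∑ k ∈ (s.erase j).erase i, (if Function.update t i
          (Function.update (t i) x (t j (!y))) k (σ' k) = w then 1 else 0) =
          ∑ k ∈ (s.erase j).erase i, (if t k (if k = j then (if σ' i = x then !y else y)
            else σ' k) = w then 1 else 0) := by
        refine sum_congr rfl fun k hk => ?_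
        simp only [mem_erase] at hk
        rw [Function.update_of_ne hk.1, if_neg hk.2.1]
      have e2 : ∑ k ∈ (s.erase j).erase i, ((if Function.update t i
          (Function.update (t i) x (t j (!y))) k true = w then 1 else 0) + (if Function.update t i
          (Function.update (t i) x (t j (!y))) k false = w then 1 else 0)) =
          ∑ k ∈ (s.erase j).erase i, ((if t k true = w then 1 else 0) +
            (if t k false = w then 1 else 0)) := by
        refine sum_congr rfl fun k hk => ?_
        simp only [mem_erase] at hk
        rw [Function.update_of_ne hk.1]
      rw [e1, e2] at hw
      simp only [if_neg hij, if_true, Function.update_self] at hw ⊢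
      generalize ∑ k ∈ (s.erase j).erase i, (if t k (if k = j then (if σ' i = x then !y else y)
            else σ' k) = w then 1 else 0) = A at hw ⊢
      generalize ∑ k ∈ (s.erase j).erase i, ((if t k true = w then 1 else 0) +
            (if t k false = w then 1 else 0)) = B at hw ⊢
      generalize σ' i = z at hw ⊢
      cases x <;> cases y <;> cases z <;> simp at hw hxy ⊢ <;> rw [hxy] at * <;> omega
    · push Not at h
      refine ⟨fun _ => true, fun w => ?_⟩
      by_cases hw : ∃ i ∈ s, t i true = w
      · obtain ⟨i, hi, rfl⟩ := hw
        rw [← add_sum_erase _ _ hi, ← add_sum_erase _ _ hi]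
        have e1 : ∑ k ∈ s.erase i, (if t k true = t i true then 1 else 0) = 0 := by
          refine sum_eq_zero fun k hk => ?_
          simp only [mem_erase] at hk
          rw [if_neg (h k hk.2 i hi hk.1 true true)]
        rw [e1]
        simp only [if_true]
        omega
      · push Not at hw
        rw [sum_eq_zero fun k hk => if_neg (hw k hk)]
        omega

/-! ### Ears -/

/-- `P` is the vertex set of a path in `H` that starts at `y`, avoids `R`, and is followed by an
edge `b ≠ a` into `R`. The set `F` consists of the edges of the path; that these form a path is
recorded by `F` connecting `P` and by the degrees of the vertices of `P`. -/
def EarPath (G : Multigraph V E) (H : Finset E) (a : E) (R : Set V) (y : V) (P : Set V) : Prop :=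
  y ∈ P ∧ (∀ w ∈ P, w ∉ R) ∧ ∃ (F : Finset E) (b : E) (v z : V), F ⊆ H ∧ b ∈ H ∧ b ≠ a ∧
    G.ends b = s(v, z) ∧ v ∈ R ∧ z ∈ P ∧ G.Links F P ∧ (∀ e ∈ F, ∀ w ∈ G.ends e, w ∈ P) ∧
    ∀ w ∈ P, G.inc (insert b F) w = if w = y then 1 else 2

/-- Every cut is crossed by at least two edges of `H`. -/
def TwoCuts (G : Multigraph V E) (H : Finset E) : Prop :=
  ∀ X : Set V, (∃ x, x ∈ X) → (∃ y, y ∉ X) →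
    ∃ e ∈ H, ∃ e' ∈ H, e ≠ e' ∧ G.Crosses e X ∧ G.Crosses e' X

lemma TwoCuts.exists_ne {G : Multigraph V E} {H : Finset E} (h2 : G.TwoCuts H) {X : Set V}
    {x y : V} (hx : x ∈ X) (hy : y ∉ X) (a : E) : ∃ e ∈ H, e ≠ a ∧ G.Crosses e X := by
  obtain ⟨e, he, e', he', hne, h, h'⟩ := h2 X ⟨x, hx⟩ ⟨y, hy⟩
  by_cases hea : e = a
  · exact ⟨e', he', fun h => hne (hea.trans h.symm), h'⟩
  · exact ⟨e, he, hea, h⟩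

lemma exists_earPath [Finite V] {G : Multigraph V E} {H : Finset E} (h2 : G.TwoCuts H)
    {a : E} {R : Set V} {u x : V} (hu : u ∈ R) (hx : x ∉ R) : ∃ P, G.EarPath H a R x P := by
  -- A set `S` containing `R` such that `R` is reached from each vertex of `S` within `S` grows
  -- until it contains `x`. Staying within `S` ensures that a new vertex is not on the old path.
  suffices hgrow : ∀ S : Set V,
      (R ⊆ S ∧ ∀ y ∈ S, y ∉ R → ∃ P ⊆ S, G.EarPath H a R y P) → x ∈ S ∨ ∃ S', S ⊂ S' ∧
        (R ⊆ S' ∧ ∀ y ∈ S', y ∉ R → ∃ P ⊆ S', G.EarPath H a R y P) by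
    obtain ⟨S, ⟨-, hS⟩, hxS⟩ := exists_of_grow _ (x ∈ ·) hgrow R
      ⟨subset_rfl, fun y hy hy' => absurd hy hy'⟩
    obtain ⟨P, -, hP⟩ := hS x hxS hx
    exact ⟨P, hP⟩
  rintro S ⟨hRS, hS⟩
  by_cases hxS : x ∈ S
  · exact Or.inl hxS
  obtain ⟨c, hcH, hca, s, z, hc, hs, hz⟩ := h2.exists_ne (hRS hu) hxS a
  have hzR : z ∉ R := fun h => hz (hRS h)
  refine Or.inr ⟨insert z S, Set.ssubset_insert hz, hRS.trans (Set.subset_insert _ _), ?_⟩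
  rintro y (rfl | hy) hyR
  swap
  · obtain ⟨P, hPS, hP⟩ := hS y hy hyR
    exact ⟨P, hPS.trans (Set.subset_insert _ _), hP⟩
  by_cases hsR : s ∈ R
  · refine ⟨{y}, by simp, rfl, by simpa using hzR, ∅, c, s, y, by simp, hcH, hca, hc, hsR, rfl,
      G.links_singleton _ _, by simp, ?_⟩
    rintro w rfl
    rw [G.inc_insert (by simp), hc]
    simp [inc]
  obtain ⟨P, hPS, hsP, hPR, F, b, v, z, hFH, hbH, hba, hb, hv, hzP, hL, hFP, hdeg⟩ := hS s hs hsR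
  have hyP : y ∉ P := fun h => hz (hPS h)
  have hin : ∀ e ∈ insert b F, ∀ w ∈ G.ends e, w ∈ P ∪ R := by
    intro e he w hw
    rcases mem_insert.1 he with rfl | he
    · rw [hb, Sym2.mem_iff] at hw
      rcases hw with rfl | rfl
      · exact Or.inr hv
      · exact Or.inl hzP
    · exact Or.inl (hFP e he w hw)
  have hyPR : y ∉ P ∪ R := fun h => h.elim hyP hzR
  have hcF : c ∉ insert b F := fun h => hyPR (hin c h y (by rw [hc]; simp))
  refine ⟨insert y P, Set.insert_subset_insert hPS, Set.mem_insert _ _, ?_, insert c F, b, v, z,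
    insert_subset hcH hFH, hbH, hba, hb, hv, Set.mem_insert_of_mem _ hzP, ?_, ?_, ?_⟩
  · rintro w (rfl | hw)
    · exact hzR
    · exact hPR w hw
  · rw [Set.insert_eq]
    exact (G.links_singleton ∅ y).glue hL (hc.trans Sym2.eq_swap) rfl hsP (by simp)
      (subset_insert _ _) (mem_insert_self _ _)
  · intro e he w hw
    rcases mem_insert.1 he with rfl | he
    · rw [hc, Sym2.mem_iff] at hw
      rcases hw with rfl | rfl
      · exact Or.inr hsP
      · exact Or.inl rfl
    · exact Or.inr (hFP e he w hw)
  · intro w hw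
    rw [insert_comm, G.inc_insert hcF, hc]
    rcases hw with rfl | hw
    · rw [G.inc_eq_zero hin hyPR]
      simp
    · have hwy : w ≠ y := fun h => hyP (h ▸ hw)
      rw [hdeg w hw]
      by_cases hws : w = s <;> simp [hwy, hws]
      subst hws
      simp [hwy]

/-- The record kept of a system of ears in `H` that starts from the vertex `r` and covers `R`.
Each ear `i` has attachment vertices `t i true` and `t i false`, and `D` is the set of the edges of
all ears. For a choice `σ` of one attachment of each ear, `K σ` stands for the ears without their
end edges at the attachments that are not chosen; only the connectivity of `K σ` and the bounds on
its degrees are recorded. The term `if w = r then 0 else 2` is the degree of `w` in the ear that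
has `w` as an inner vertex; there is no such ear for `w = r`. -/
def EarSystem (G : Multigraph V E) (H : Finset E) (r : V) (R : Set V) : Prop :=
  r ∈ R ∧ ∃ (ι : Type) (_ : Fintype ι) (t : ι → Bool → V) (K : (ι → Bool) → Finset E)
    (D : Finset E), D ⊆ H ∧ (∀ e ∈ D, ∀ w ∈ G.ends e, w ∈ R) ∧ (∀ i c, t i c ∈ R) ∧
    (∀ σ, K σ ⊆ D) ∧ (∀ σ, G.Links (K σ) R) ∧
    (∀ σ, ∀ w ∈ R, G.inc (K σ) w ≤
      (if w = r then 0 else 2) + ∑ i, (if t i (σ i) = w then 1 else 0)) ∧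
    ∀ w ∈ R, (if w = r then 0 else 2) +
      ∑ i, ((if t i true = w then 1 else 0) + (if t i false = w then 1 else 0)) ≤ G.inc D w

lemma EarSystem.init (G : Multigraph V E) (H : Finset E) (r : V) : G.EarSystem H r {r} := by
  refine ⟨rfl, Empty, inferInstance, fun i => i.elim, fun _ => ∅, ∅, by simp, by simp,
    fun i => i.elim, by simp, fun _ => G.links_singleton _ _, ?_, ?_⟩
  · rintro σ w rfl
    simp [inc]
  · rintro w rfl
    simp

lemma EarSystem.step [Finite V] {G : Multigraph V E} {H : Finset E} (h2 : G.TwoCuts H)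
    {r : V} {R : Set V} (h : G.EarSystem H r R) {x₀ : V} (hx₀ : x₀ ∉ R) :
    ∃ R', R ⊂ R' ∧ G.EarSystem H r R' := by
  obtain ⟨hr, ι, _, t, K, D, hDH, hDR, htR, hKD, hKL, hup, hlow⟩ := h
  obtain ⟨a, haH, -, -, -, ⟨u, x, ha, hu, hx⟩, -⟩ := h2 R ⟨r, hr⟩ ⟨x₀, hx₀⟩
  obtain ⟨P, hxP, hPR, F, b, v, z, hFH, hbH, hba, hb, hv, hzP, hL, hFP, hdeg⟩ :=
    exists_earPath h2 (a := a) hu hx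
  have hbin : ∀ e ∈ insert b F, ∀ w ∈ G.ends e, w = v ∨ w ∈ P := by
    intro e he w hw
    rcases mem_insert.1 he with rfl | he
    · rw [hb, Sym2.mem_iff] at hw
      rcases hw with rfl | rfl
      · exact Or.inl rfl
      · exact Or.inr hzP
    · exact Or.inr (hFP e he w hw)
  have haF : a ∉ insert b F := by
    rintro h
    rcases mem_insert.1 h with h | h
    · exact hba h.symm
    · exact hPR u (hFP a h u (by simp [ha])) hu
  have hbF : b ∉ F := fun h => hPR v (hFP b h v (by simp [hb])) hv
  have hFzero : ∀ w ∈ R, G.inc F w = 0 := fun w hw => G.inc_eq_zero hFP fun h => hPR w h hw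
  have hDzero : ∀ w ∈ P, G.inc D w = 0 := fun w hw => G.inc_eq_zero hDR (hPR w hw)
  have haR : ∀ w ∈ R, (w ∈ G.ends a ↔ u = w) := by
    intro w hw
    rw [ha, Sym2.mem_iff]
    exact ⟨fun h => h.elim Eq.symm fun h => absurd hw (h ▸ hx), fun h => Or.inl h.symm⟩
  have hbR : ∀ w ∈ R, (w ∈ G.ends b ↔ v = w) := by
    intro w hw
    rw [hb, Sym2.mem_iff]
    exact ⟨fun h => h.elim Eq.symm fun h => absurd hw (h ▸ hPR z hzP), fun h => Or.inl h.symm⟩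
  -- The degrees of the vertices on the ear, and of its attachment vertices, within the ear.
  have hearP : ∀ w ∈ P, G.inc (insert a (insert b F)) w = 2 := by
    intro w hw
    rw [G.inc_insert haF, hdeg w hw, ha]
    have hwu : w ≠ u := fun h => hPR w hw (h ▸ hu)
    by_cases hwx : w = x <;> simp [hwu, hwx]
  have hearR : ∀ w ∈ R, G.inc (insert a (insert b F)) w =
      (if u = w then 1 else 0) + (if v = w then 1 else 0) := by
    intro w hw
    rw [G.inc_insert haF, G.inc_insert hbF, hFzero w hw]
    simp only [haR w hw, hbR w hw]
    omega
  have hdisj : Disjoint D (insert a (insert b F)) := by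
    rw [Finset.disjoint_left]
    intro e heD he
    rcases mem_insert.1 he with rfl | he
    · exact hx (hDR e heD x (by simp [ha]))
    rcases mem_insert.1 he with rfl | he
    · exact hPR z hzP (hDR e heD z (by simp [hb]))
    · have hlinks := hDR e heD
      have hF := hFP e he
      induction h : G.ends e with
      | _ p q => exact hPR p (hF p (by simp [h])) (hlinks p (by simp [h]))
  have htP : ∀ w ∈ P, ∀ i c, t i c ≠ w := fun w hw i c h => hPR w hw (h ▸ htR i c)
  refine ⟨P ∪ R, ⟨Set.subset_union_right, fun h => hx (h (Or.inl hxP))⟩, Or.inr hr, Option ι,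
    inferInstance, fun i c => i.elim (if c then u else v) (fun i => t i c),
    fun σ => K (fun i => σ (some i)) ∪ insert (if σ none then a else b) F,
    D ∪ insert a (insert b F), ?_, ?_, ?_, ?_, ?_, ?_, ?_⟩
  · exact union_subset hDH (insert_subset haH (insert_subset hbH hFH))
  · intro e he w hw
    rcases mem_union.1 he with he | he
    · exact Or.inr (hDR e he w hw)
    rcases mem_insert.1 he with rfl | he
    · rw [ha, Sym2.mem_iff] at hw
      rcases hw with rfl | rfl
      · exact Or.inr hu
      · exact Or.inl hxP
    · rcases hbin e he w hw with rfl | h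
      · exact Or.inr hv
      · exact Or.inl h
  · rintro (_ | i) c
    · cases c
      · exact Or.inr hv
      · exact Or.inr hu
    · exact Or.inr (htR i c)
  · intro σ
    refine union_subset_union (hKD _) (insert_subset ?_ ?_)
    · split_ifs <;> simp
    · exact (subset_insert _ _).trans (subset_insert _ _)
  · intro σ
    have hF : F ⊆ K (fun i => σ (some i)) ∪ insert (if σ none then a else b) F :=
      (subset_insert _ _).trans subset_union_right
    have hmem : (if σ none then a else b) ∈
        K (fun i => σ (some i)) ∪ insert (if σ none then a else b) F := by simp
    cases hσ : σ none
    · change G.Links (K (fun i => σ (some i)) ∪ insert (if σ none then a else b) F) _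
      rw [hσ] at hF hmem ⊢
      exact hL.glue (hKL _) (hb.trans Sym2.eq_swap) hzP hv hF subset_union_left hmem
    · change G.Links (K (fun i => σ (some i)) ∪ insert (if σ none then a else b) F) _
      rw [hσ] at hF hmem ⊢
      exact hL.glue (hKL _) (ha.trans Sym2.eq_swap) hxP hu hF subset_union_left hmem
  · intro σ w hw
    rw [Fintype.sum_option]
    refine (G.inc_union_le _ _ w).trans ?_
    rcases hw with hw | hw
    · have h1 : G.inc (K fun i => σ (some i)) w = 0 :=
        Nat.le_zero.1 ((G.inc_mono (hKD _) w).trans (hDzero w hw).le)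
      have h2 : G.inc (insert (if σ none then a else b) F) w ≤ 2 := by
        rw [← hearP w hw]
        refine G.inc_mono (insert_subset ?_ ?_) w
        · split_ifs <;> simp
        · exact (subset_insert _ _).trans (subset_insert _ _)
      have h3 : w ≠ r := fun h => hPR w hw (h ▸ hr)
      rw [if_neg h3]
      omega
    · have h1 := hup (fun i => σ (some i)) w hw
      have h2 : G.inc (insert (if σ none then a else b) F) w =
          if (if σ none then u else v) = w then 1 else 0 := by
        cases σ none
        · simp only [Bool.false_eq_true, if_false]
          rw [G.inc_insert hbF, hFzero w hw]
          simp only [hbR w hw, zero_add]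
        · simp only [if_true]
          rw [G.inc_insert (fun h => haF (mem_insert_of_mem h)), hFzero w hw]
          simp only [haR w hw, zero_add]
      have h3 : G.inc (K fun i => σ (some i)) w +
          (if (if σ none then u else v) = w then 1 else 0) ≤ (if w = r then 0 else 2) +
          ((if (if σ none then u else v) = w then 1 else 0) +
            ∑ i, if t i (σ (some i)) = w then 1 else 0) := by omega
      rw [h2]
      exact h3
  · intro w hw
    rw [Fintype.sum_option, G.inc_union hdisj]
    change (if w = r then 0 else 2) + (((if u = w then 1 else 0) + (if v = w then 1 else 0)) +
      ∑ i, ((if t i true = w then 1 else 0) + (if t i false = w then 1 else 0))) ≤ _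
    rcases hw with hw | hw
    · have hu' : u ≠ w := fun h => hPR w hw (h ▸ hu)
      have hv' : v ≠ w := fun h => hPR w hw (h ▸ hv)
      have h3 : w ≠ r := fun h => hPR w hw (h ▸ hr)
      simp [htP w hw, hu', hv', h3, hearP w hw]
    · have := hlow w hw
      rw [hearR w hw]
      omega

/-- If every cut is crossed by two edges of `H`, then `H` contains a connected spanning subgraph
in which each degree exceeds half of the degree in `H` by at most `3 / 2`. -/
lemma exists_links_sparse [Finite V] {G : Multigraph V E} {H : Finset E} (h2 : G.TwoCuts H)
    (r : V) : ∃ K ⊆ H, G.Links K Set.univ ∧ ∀ w, 2 * G.inc K w ≤ G.inc H w + 3 := by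
  have hgrow : ∀ R, G.EarSystem H r R → R = Set.univ ∨ ∃ R', R ⊂ R' ∧ G.EarSystem H r R' := by
    intro R hR
    by_cases h : R = Set.univ
    · exact Or.inl h
    · obtain ⟨x, hx⟩ := (Set.ne_univ_iff_exists_notMem R).1 h
      exact Or.inr (hR.step h2 hx)
  obtain ⟨R, ⟨-, ι, _, t, K, D, hDH, -, -, hKD, hKL, hup, hlow⟩, rfl⟩ :=
    exists_of_grow _ (· = Set.univ) hgrow {r} (EarSystem.init G H r)
  obtain ⟨σ, hσ⟩ := exists_balanced _ (univ : Finset ι) rfl t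
  refine ⟨K σ, (hKD σ).trans hDH, hKL σ, fun w => ?_⟩
  have h1 := hup σ w trivial
  have h2 := hlow w trivial
  have h3 := hσ w
  have h4 := G.inc_mono hDH w
  split_ifs at h1 h2 <;> omega

/-! ### Spanning trees -/

lemma IsSpanningTree.links {G : Multigraph V E} {T : Finset E}
    (hT : G.IsSpanningTree (T : Set E)) : G.Links T Set.univ := by
  rintro X ⟨x, -, hx⟩ ⟨y, -, hy⟩
  obtain ⟨p⟩ := hT.2.2.1.preconnected ⟨x, trivial⟩ ⟨y, trivial⟩
  obtain ⟨d, -, h1, h2⟩ := p.exists_boundary_dart {z | z.1 ∈ X} hx hy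
  have hadj := d.adj
  simp only [simpleOn, fromRel_adj] at hadj
  rcases hadj.2 with ⟨e, he, h⟩ | ⟨e, he, h⟩
  · exact ⟨e, he, _, _, h, h1, h2⟩
  · exact ⟨e, he, _, _, h.trans Sym2.eq_swap, h1, h2⟩

/-- A connected spanning subgraph contains a spanning tree: choose one edge of the multigraph
for each edge of a spanning tree of the underlying simple graph. -/
lemma Links.exists_isSpanningTree [Finite V] [Nonempty V] {G : Multigraph V E} {K : Finset E}
    (hK : G.Links K Set.univ) : ∃ T ⊆ K, G.IsSpanningTree (T : Set E) := by
  have hconn : (G.simpleOn Set.univ (K : Set E)).Connected := by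
    have : Nonempty (Set.univ : Set V) := ⟨⟨Classical.arbitrary V, trivial⟩⟩
    refine ⟨fun x y => ?_⟩
    by_contra hxy
    obtain ⟨e, he, p, q, hpq, ⟨hp, hp'⟩, hq⟩ := hK
      {z | ∃ h, (G.simpleOn Set.univ (K : Set E)).Reachable x ⟨z, h⟩}
      ⟨x.1, trivial, x.2, Reachable.refl _⟩ ⟨y.1, trivial, fun h => hxy h.2⟩
    refine hq ⟨trivial, hp'.trans (Adj.reachable ?_)⟩
    simp only [simpleOn, fromRel_adj]
    refine ⟨fun h => hq ?_, Or.inl ⟨e, he, hpq⟩⟩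
    have hpq' : p = q := congrArg Subtype.val h
    exact hpq' ▸ ⟨hp, hp'⟩
  obtain ⟨T₀, hT₀, htree⟩ := hconn.exists_isTree_le
  have hg : ∀ z : T₀.edgeSet, ∃ e ∈ K, G.ends e = z.1.map Subtype.val := by
    rintro ⟨z, hz⟩
    induction z with
    | _ a b =>
      have hadj := hT₀ hz
      simp only [simpleOn, fromRel_adj] at hadj
      rcases hadj.2 with ⟨e, he, h⟩ | ⟨e, he, h⟩
      · exact ⟨e, he, h⟩
      · exact ⟨e, he, h.trans Sym2.eq_swap⟩
  choose g hgK hg using hg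
  have hinj : Function.Injective (Sym2.map (Subtype.val : ↥(Set.univ : Set V) → V)) :=
    Sym2.map.injective Subtype.val_injective
  have hTK : Set.range g ⊆ K := by
    rintro _ ⟨z, rfl⟩
    exact hgK z
  have hsimple : G.simpleOn Set.univ (Set.range g) = T₀ := by
    have key : ∀ a b : (Set.univ : Set V),
        (∃ e ∈ Set.range g, G.ends e = s(a.1, b.1)) ↔ T₀.Adj a b := by
      intro a b
      constructor
      · rintro ⟨_, ⟨z, rfl⟩, h⟩
        rw [hg] at h
        have : z.1 = s(a, b) := hinj h
        rw [← mem_edgeSet, ← this]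
        exact z.2
      · intro h
        exact ⟨_, ⟨⟨s(a, b), h⟩, rfl⟩, hg _⟩
    ext a b
    simp only [simpleOn, fromRel_adj, key]
    exact ⟨fun h => h.2.elim id Adj.symm, fun h => ⟨h.ne, Or.inl h⟩⟩
  refine ⟨(K.finite_toSet.subset hTK).toFinset, by simpa using hTK, ?_⟩
  rw [Set.Finite.coe_toFinset]
  refine ⟨?_, ?_, ?_, ?_⟩
  · rintro _ ⟨⟨z, hz⟩, rfl⟩ h
    rw [hg] at h
    induction z with
    | _ a b => exact T₀.ne_of_adj hz (Subtype.ext h)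
  · rintro _ ⟨z, rfl⟩ _ ⟨z', rfl⟩ h
    rw [hg, hg] at h
    rw [Subtype.ext (hinj h)]
  · rw [hsimple]
    exact htree.connected
  · rw [hsimple]
    exact htree.isAcyclic

/-- The case of two trees. -/
lemma exists_sparse_of_two [Finite V] {G : Multigraph V E} {A B : Finset E}
    (hA : G.IsSpanningTree (A : Set E)) (hB : G.IsSpanningTree (B : Set E)) (hAB : Disjoint A B) :
    ∃ T ⊆ A ∪ B, G.IsSpanningTree (T : Set E) ∧
      ∀ w, 2 * G.inc T w ≤ G.inc A w + G.inc B w + 3 := by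
  have : Nonempty V := hA.2.2.1.nonempty.map Subtype.val
  have h2 : G.TwoCuts (A ∪ B) := by
    rintro X ⟨x, hx⟩ ⟨y, hy⟩
    obtain ⟨e, he, hc⟩ := hA.links X ⟨x, trivial, hx⟩ ⟨y, trivial, hy⟩
    obtain ⟨e', he', hc'⟩ := hB.links X ⟨x, trivial, hx⟩ ⟨y, trivial, hy⟩
    exact ⟨e, mem_union_left _ he, e', mem_union_right _ he',
      fun h => Finset.disjoint_left.1 hAB he (h ▸ he'), hc, hc'⟩
  obtain ⟨K, hKH, hK, hdeg⟩ := exists_links_sparse h2 (Classical.arbitrary V)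
  obtain ⟨T, hTK, hT⟩ := hK.exists_isSpanningTree
  refine ⟨T, hTK.trans hKH, hT, fun w => ?_⟩
  rw [← G.inc_union hAB]
  have := G.inc_mono hTK w
  have := hdeg w
  omega

lemma exists_sparse_of_pow [Finite V] {ι : Type*} {G : Multigraph V E} {Ts : ι → Finset E}
    (hdisj : Pairwise (Function.onFun Disjoint Ts))
    (hSpan : ∀ i, G.IsSpanningTree (Ts i : Set E)) (p : ℕ) : ∀ s : Finset ι, #s = 2 ^ p →
    ∃ T ⊆ s.biUnion Ts, G.IsSpanningTree (T : Set E) ∧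
      ∀ w, (G.inc T w : ℝ) ≤ (∑ i ∈ s, G.inc (Ts i) w : ℕ) / 2 ^ p + 3 * p / 2 := by
  induction p with
  | zero =>
    intro s hs
    obtain ⟨i, rfl⟩ := card_eq_one.1 hs
    exact ⟨Ts i, by simp, hSpan i, by simp⟩
  | succ p ih =>
    intro s hs
    obtain ⟨s₁, hs₁, hcard⟩ := exists_subset_card_eq (s := s) (n := 2 ^ p)
      (by rw [hs]; exact Nat.pow_le_pow_right (by norm_num) (Nat.le_succ p))
    obtain ⟨A, hAs, hA, hdA⟩ := ih s₁ hcard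
    obtain ⟨B, hBs, hB, hdB⟩ := ih (s \ s₁) (by
      rw [card_sdiff_of_subset hs₁, hs, hcard, pow_succ]; omega)
    have hAB : Disjoint A B := by
      refine Finset.disjoint_of_subset_left hAs (Finset.disjoint_of_subset_right hBs ?_)
      rw [disjoint_biUnion_left]
      intro i hi
      rw [disjoint_biUnion_right]
      intro j hj
      exact hdisj fun h => (mem_sdiff.1 hj).2 (h ▸ hi)
    obtain ⟨T, hTs, hT, hdT⟩ := exists_sparse_of_two hA hB hAB
    refine ⟨T, hTs.trans (union_subset (hAs.trans (biUnion_subset_biUnion_of_subset_left _ hs₁))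
      (hBs.trans (biUnion_subset_biUnion_of_subset_left _ sdiff_subset))), hT, fun w => ?_⟩
    have h1 : (2 * G.inc T w : ℝ) ≤ G.inc A w + G.inc B w + 3 := by exact_mod_cast hdT w
    have h2 := hdA w
    have h3 := hdB w
    rw [← sum_sdiff hs₁]
    push_cast at h2 h3 ⊢
    rw [pow_succ, ← div_div, add_div]
    linarith

/-- The edges of pairwise disjoint edge sets are counted at most once in the degree in `G`. -/
lemma sum_inc_le_deg [Fintype E] {ι : Type*} [Fintype ι] {G : Multigraph V E}
    {Ts : ι → Finset E} (hdisj : Pairwise (Function.onFun Disjoint Ts)) (w : V) :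
    ∑ i, G.inc (Ts i) w ≤ G.deg w := by
  have h1 : ∑ i, G.inc (Ts i) w = G.inc (univ.biUnion Ts) w := by
    unfold inc
    rw [filter_biUnion, card_biUnion]
    exact fun i _ j _ hij => disjoint_filter_filter (hdisj hij)
  rw [h1]
  refine (G.inc_mono (subset_univ _) w).trans ?_
  unfold deg degOn inc
  refine le_trans (le_of_eq ?_) (Nat.le_add_right _ _)
  rw [← Set.ncard_coe_finset]
  congr 1
  ext e
  simp

/-- A spanning tree has no loops, so its degrees count incident edges. -/
lemma IsSpanningTree.degOn_eq {G : Multigraph V E} {T : Finset E}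
    (hT : G.IsSpanningTree (T : Set E)) (w : V) : G.degOn T w = G.inc T w := by
  have h : {e ∈ (T : Set E) | G.ends e = s(w, w)} = ∅ := by
    rw [Set.eq_empty_iff_forall_notMem]
    rintro e ⟨he, h⟩
    exact hT.1 e he (by simp [h])
  unfold degOn inc
  rw [h, Set.ncard_empty, add_zero, ← Set.ncard_coe_finset]
  congr 1
  ext e
  simp

end Multigraph

open Multigraph in
/-- If a multigraph `G` contains `2^p` pairwise edge-disjoint spanning trees (`p ≥ 1`),
then it has a spanning tree `T` with `deg_T v ≤ deg_G v / 2^p + 3p/2` for every `v`. -/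
theorem sparse_spanning_tree_of_many_trees {V E : Type} [Fintype V] [Fintype E]
    (p : ℕ) (hp : 0 < p) (G : Multigraph V E) (Ts : Fin (2 ^ p) → Set E)
    (hdisj : Pairwise (Function.onFun Disjoint Ts))
    (hSpan : ∀ i, G.IsSpanningTree (Ts i)) :
    ∃ T : Set E, G.IsSpanningTree T ∧
      ∀ v : V, (G.degOn T v : ℝ) ≤ (G.deg v : ℝ) / 2 ^ p + 3 * p / 2 := by
  classical
  have hcoe : ∀ i, (((Ts i).toFinite.toFinset : Finset E) : Set E) = Ts i := fun i =>
    Set.Finite.coe_toFinset _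
  have hdisj' : Pairwise (Function.onFun Disjoint fun i => (Ts i).toFinite.toFinset) := by
    intro i j hij
    simp only [Function.onFun]
    rw [← Finset.disjoint_coe, hcoe, hcoe]
    exact hdisj hij
  obtain ⟨T, -, hT, hdeg⟩ := exists_sparse_of_pow (G := G) hdisj'
    (fun i => by rw [hcoe]; exact hSpan i) p Finset.univ (by simp)
  refine ⟨T, hT, fun v => ?_⟩
  rw [hT.degOn_eq]
  refine (hdeg v).trans ?_
  have h : ((∑ i, G.inc (Ts i).toFinite.toFinset v : ℕ) : ℝ) ≤ G.deg v := by
    exact_mod_cast sum_inc_le_deg hdisj' v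
  gcongr
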